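/- Let n ≥ 3, R > 0, and let 𝔹_R be the open ball of radius R in ℝⁿ. For x ∈ 𝔹_R, let 𝒦_{n,R}(x) be the smallest constant such that |∇u(x)| ≤ 𝒦_{n,R}(x)·‖g‖_{L^∞(∂𝔹_R)} for every u that is the Poisson integral over ∂𝔹_R of a boundary function g ∈ L^∞(∂𝔹_R). Then 𝒦_{n,R}(x) = [2^{n−2}(n−2) R^{n−1} / (π (R+|x|)^{n−1} (R−|x|))] · sup_{γ≥0} (1/√(1+γ²)) ∫₀^π sin^{n−3}φ dφ ∫₀^{π/2} G_n(θ, φ; |x|/R, γ) dθ, where G_n(θ, φ; r, γ) = |n γ sin 2θ cos φ + n cos 2θ + (n−2) r| · sin^{n−2}θ / [1 + ((1−r)/(1+r))² tan²θ]^{(n−2)/2}. -/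

import Mathlib

open MeasureTheory Real Filter Metric
open scoped Real RealInnerProductSpace

noncomputable section

/-- `Eu n` is the Euclidean space `ℝⁿ`. -/
abbrev Eu (n : ℕ) := EuclideanSpace ℝ (Fin n)

/-- `ω_n`: the surface area of the unit sphere `S^{n-1}` in `ℝⁿ`,
given by the classical formula `2 π^{n/2} / Γ(n/2)`. -/
def sphereArea (n : ℕ) : ℝ := 2 * π ^ ((n : ℝ) / 2) / Real.Gamma ((n : ℝ) / 2)

/-- Scaling map from the unit sphere onto the sphere of radius `R` in `ℝⁿ`. -/
def sphereScale (n : ℕ) (R : ℝ) (hR : 0 < R) (ω : Metric.sphere (0 : Eu n) 1) :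
    Metric.sphere (0 : Eu n) R :=
  ⟨R • (ω : Eu n), by
    have h1 : ‖(ω : Eu n)‖ = 1 := by simpa using ω.2
    simp [mem_sphere_zero_iff_norm, norm_smul, h1, abs_of_pos hR]⟩

/-- The surface measure `σ` on the sphere of radius `R` in `ℝⁿ`: the pushforward
under the scaling map of `R^{n-1}` times the surface measure of the unit sphere. -/
def sphereMeasureR (n : ℕ) (R : ℝ) (hR : 0 < R) : Measure (Metric.sphere (0 : Eu n) R) :=
  Measure.map (sphereScale n R hR) ((ENNReal.ofReal (R ^ (n - 1))) • (volume.toSphere))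

/-- The function `G_n(θ, φ; r, γ)` from the statement. -/
def Gfun (n : ℕ) (θ φ r γ : ℝ) : ℝ :=
  |(n : ℝ) * γ * Real.sin (2 * θ) * Real.cos φ + (n : ℝ) * Real.cos (2 * θ) +
      ((n : ℝ) - 2) * r| * Real.sin θ ^ (n - 2) /
    (1 + ((1 - r) / (1 + r)) ^ 2 * Real.tan θ ^ 2) ^ (((n : ℝ) - 2) / 2)

/-- The claimed value of the sharp coefficient `𝒦_{n,R}(x)` (with `ρ = |x|`). -/
def KcoefR (n : ℕ) (R ρ : ℝ) : ℝ :=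
  (2 ^ (n - 2) * ((n : ℝ) - 2) * R ^ (n - 1) / (π * (R + ρ) ^ (n - 1) * (R - ρ))) *
    ⨆ γ ∈ Set.Ici (0 : ℝ), (1 / Real.sqrt (1 + γ ^ 2)) *
      ∫ φ in (0:ℝ)..π, Real.sin φ ^ (n - 3) * ∫ θ in (0:ℝ)..(π / 2), Gfun n θ φ (ρ / R) γ

/-- The Poisson integral `u(x) = (1/(ωₙ R)) ∫_{∂𝔹_R} ((R²-|x|²)/|y-x|ⁿ) g(y) dσ_y`
of a boundary function `g ∈ L^∞(∂𝔹_R)`. -/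
def poissonBallR {n : ℕ} (R : ℝ) (hR : 0 < R)
    (g : Metric.sphere (0 : Eu n) R → ℝ) (x : Eu n) : ℝ :=
  (1 / (sphereArea n * R)) * ∫ y : Metric.sphere (0 : Eu n) R,
    ((R ^ 2 - ‖x‖ ^ 2) / ‖(y : Eu n) - x‖ ^ n) * g y ∂(sphereMeasureR n R hR)

open scoped ENNReal

lemma lint_polar {E : Type*} [NormedAddCommGroup E] [InnerProductSpace ℝ E] [FiniteDimensional ℝ E]
    [MeasurableSpace E] [BorelSpace E] [Nontrivial E] (F : E → ℝ≥0∞) (hF : Measurable F) :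
    ∫⁻ x, F x = ∫⁻ ω, ∫⁻ r in Set.Ioi (0:ℝ),
      ENNReal.ofReal (r ^ (Module.finrank ℝ E - 1)) * F (r • (ω : E)) ∂volume ∂(volume : Measure E).toSphere := by
  have h1 : ∫⁻ x, F x = ∫⁻ x : ({(0 : E)}ᶜ : Set E), F x ∂((volume : Measure E).comap (fun y : ({(0 : E)}ᶜ : Set E) => (y : E))) := by
    rw [lintegral_subtype_comap (measurableSet_singleton _).compl F, restrict_compl_singleton]
  rw [h1]
  have h2 := (volume : Measure E).measurePreserving_homeomorphUnitSphereProd.lintegral_comp_emb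
    (Homeomorph.measurableEmbedding _) (fun p : sphere (0 : E) 1 × Set.Ioi (0:ℝ) => F ((p.2 : ℝ) • (p.1 : E)))
  have h3 : ∀ x : ({(0 : E)}ᶜ : Set E),
      (((homeomorphUnitSphereProd E x).2 : ℝ) • ((homeomorphUnitSphereProd E x).1 : E)) = x := by
    intro x
    have := (homeomorphUnitSphereProd E).symm_apply_apply x
    conv_rhs => rw [← this]
    simp only [homeomorphUnitSphereProd_symm_apply_coe]
  simp only [h3] at h2
  rw [h2, lintegral_prod]
  · congr 1
    ext ω
    rw [Measure.volumeIoiPow, lintegral_withDensity_eq_lintegral_mul]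
    · simp only [Pi.mul_apply]
      exact lintegral_subtype_comap measurableSet_Ioi
        (fun r : ℝ => ENNReal.ofReal (r ^ (Module.finrank ℝ E - 1)) * F (r • (ω : E)))
    · fun_prop
    · fun_prop
  · fun_prop

lemma lint_norm {k : ℕ} (hk : 1 ≤ k) (F : ℝ → ℝ≥0∞) (hF : Measurable F) :
    ∫⁻ z : Eu k, F ‖z‖ = (volume : Measure (Eu k)).toSphere Set.univ *
      ∫⁻ s in Set.Ioi (0:ℝ), ENNReal.ofReal (s ^ (k-1)) * F s := by
  have : Nonempty (Fin k) := ⟨⟨0, hk⟩⟩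
  rw [lint_polar _ (by fun_prop)]
  simp only [finrank_euclideanSpace, Fintype.card_fin]
  rw [mul_comm, ← lintegral_const]
  congr 1
  ext ω
  refine setLIntegral_congr_fun measurableSet_Ioi fun r hr => ?_
  have : ‖(ω : Eu k)‖ = 1 := by simpa using ω.2
  simp only [norm_smul, this, mul_one, Real.norm_eq_abs, abs_of_pos (Set.mem_Ioi.1 hr)]

lemma setLIntegral_indicator_subset_aux (g : ℝ → ℝ≥0∞) :
    ∫⁻ φ in Set.Ioo (-π) π, (Set.Ioo 0 π).indicator g φ = ∫⁻ φ in Set.Ioo 0 π, g φ := by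
  have hs : Set.Ioo 0 π ⊆ Set.Ioo (-π) π := Set.Ioo_subset_Ioo_left (by linarith [pi_pos])
  rw [setLIntegral_indicator measurableSet_Ioo, Set.inter_eq_left.2 hs]

lemma lint_half (F : ℝ → ℝ → ℝ≥0∞) (hF : Measurable (Function.uncurry F)) :
    ∫⁻ b, ∫⁻ s in Set.Ioi (0:ℝ), F b s = ∫⁻ φ in Set.Ioo 0 π, ∫⁻ τ in Set.Ioi (0:ℝ),
      ENNReal.ofReal τ * F (τ * cos φ) (τ * sin φ) := by
  have h := lintegral_comp_polarCoord_symm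
    (fun p => (Set.Ioi (0:ℝ)).indicator (fun s => F p.1 s) p.2)
  have hm : Measurable (fun p : ℝ × ℝ => (Set.Ioi (0:ℝ)).indicator (fun s => F p.1 s) p.2) := by
    have : (fun p : ℝ × ℝ => (Set.Ioi (0:ℝ)).indicator (fun s => F p.1 s) p.2) =
      (Prod.snd ⁻¹' (Set.Ioi (0:ℝ))).indicator (Function.uncurry F) := by
      ext p; simp [Set.indicator, Function.uncurry]
    rw [this]
    exact hF.indicator (measurable_snd measurableSet_Ioi)
  rw [Measure.volume_eq_prod, lintegral_prod _ hm.aemeasurable] at h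
  simp only [lintegral_indicator measurableSet_Ioi] at h
  rw [← h]
  rw [polarCoord_target, ← Measure.prod_restrict, lintegral_prod_symm]
  · rw [← setLIntegral_indicator_subset_aux (fun φ => ∫⁻ τ in Set.Ioi (0:ℝ),
      ENNReal.ofReal τ * F (τ * cos φ) (τ * sin φ))]
    refine setLIntegral_congr_fun measurableSet_Ioo fun φ hφ => ?_
    by_cases h0 : 0 < φ
    · have hφ' : φ ∈ Set.Ioo 0 π := ⟨h0, hφ.2⟩
      rw [Set.indicator_of_mem hφ']
      refine setLIntegral_congr_fun measurableSet_Ioi fun τ hτ => ?_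
      have : τ * sin φ ∈ Set.Ioi (0:ℝ) := mul_pos hτ (sin_pos_of_mem_Ioo hφ')
      simp [this, polarCoord]
    · have hφ' : φ ∉ Set.Ioo 0 π := fun h => h0 h.1
      rw [Set.indicator_of_notMem hφ']
      rw [setLIntegral_congr_fun (g := fun _ => 0) measurableSet_Ioi]
      · simp
      intro τ hτ
      have h1 : sin φ ≤ 0 := sin_nonpos_of_nonpos_of_neg_pi_le (not_lt.1 h0) hφ.1.le
      have : τ * sin φ ∉ Set.Ioi (0:ℝ) := 
        not_lt.2 (mul_nonpos_of_nonneg_of_nonpos (le_of_lt hτ) h1)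
      simp only [smul_eq_mul, polarCoord_symm_apply]
      rw [Set.indicator_of_notMem this, mul_zero]
  · refine Measurable.aemeasurable ?_
    simp only [smul_eq_mul]
    have := hm.comp continuous_polarCoord_symm.measurable
    exact (measurable_fst.ennreal_ofReal).mul this

lemma lint_cons {m : ℕ} (F : (Fin (m+1) → ℝ) → ℝ≥0∞) (hF : Measurable F) :
    ∫⁻ x, F x = ∫⁻ a : ℝ, ∫⁻ z : Fin m → ℝ, F (Fin.cons a z) := by
  have h := (volume_preserving_piFinSuccAbove (fun _ : Fin (m+1) => ℝ) 0).symm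
  rw [← h.lintegral_comp_emb (MeasurableEquiv.measurableEmbedding _) F, Measure.volume_eq_prod,
    lintegral_prod]
  · simp [MeasurableEquiv.piFinSuccAbove, Fin.insertNthEquiv]
  · exact (hF.comp (MeasurableEquiv.measurable _)).aemeasurable

lemma lint_ortho {k : ℕ} (e e' : Eu (k+2)) (he : ‖e‖ = 1) (he' : ‖e'‖ = 1) (hee : ⟪e, e'⟫ = 0)
    (H : ℝ → ℝ → ℝ → ℝ≥0∞) (hH : Measurable (fun p : ℝ × ℝ × ℝ => H p.1 p.2.1 p.2.2)) :
    ∫⁻ x : Eu (k+2), H ⟪e, x⟫ ⟪e', x⟫ (‖x‖) =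
      ∫⁻ a : ℝ, ∫⁻ b : ℝ, ∫⁻ z : Eu k, H a b (√(a^2+b^2+‖z‖^2)) := by
  obtain ⟨B, hB⟩ := Orthonormal.exists_orthonormalBasis_extension_of_card_eq (𝕜 := ℝ) (E := Eu (k+2))
    (ι := Fin (k+2)) (by simp) (v := fun i => if i = 0 then e else e') (s := {0, 1}) (by
      rw [orthonormal_iff_ite]
      rintro ⟨i, rfl | rfl⟩ ⟨j, rfl | rfl⟩ <;> simp [Set.domRestrict, he, he', hee, real_inner_comm, Subtype.ext_iff])
  have hB0 : B 0 = e := by simpa using hB 0 (by simp)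
  have hB1 : B 1 = e' := by simpa using hB 1 (by simp)
  have hm : Measurable (fun x : Eu (k+2) => H (x 0) (x 1) ‖x‖) := 
    hH.comp (f := fun x : Eu (k+2) => (x 0, x 1, ‖x‖)) (by fun_prop)
  have h1 := B.measurePreserving_repr.lintegral_comp hm
  simp only [B.repr_apply_apply, hB0, hB1, LinearIsometryEquiv.norm_map] at h1
  rw [h1, ← (PiLp.volume_preserving_toLp _).lintegral_comp hm, lint_cons _ (by fun_prop)]
  refine lintegral_congr fun a => ?_
  rw [lint_cons]
  · refine lintegral_congr fun b => ?_
    rw [← (PiLp.volume_preserving_toLp _).lintegral_comp]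
    · refine lintegral_congr fun z => ?_
      have : ‖(WithLp.toLp 2 (Fin.cons a (Fin.cons b z : Fin (k+1) → ℝ)) : Eu (k+2))‖
         = √(a^2+b^2+‖(WithLp.toLp 2 z : Eu k)‖^2) := by
        rw [EuclideanSpace.norm_eq, EuclideanSpace.norm_sq_eq, Fin.sum_univ_succ, Fin.sum_univ_succ]
        simp [add_assoc]
      rw [this]
      rfl
    · exact hH.comp (f := fun z : Eu k => (a, b, √(a^2+b^2+‖z‖^2))) (by fun_prop)
  · exact (hm.comp (WithLp.measurable_toLp 2 _)).comp (f := fun z : Fin (k+1) → ℝ => (Fin.cons a z : Fin (k+2) → ℝ)) (by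
      refine measurable_pi_iff.2 fun i => ?_
      refine Fin.cases ?_ (fun j => ?_) i
      · simp
      · simpa using measurable_pi_apply j)


def radC (k : ℕ) : ℝ≥0∞ := ∫⁻ r in Set.Ioi (0:ℝ), 
  ENNReal.ofReal (r ^ (k+1)) * (Set.Iio (1:ℝ)).indicator 1 r

lemma radC_eq (k : ℕ) : radC k = ENNReal.ofReal (1 / ((k:ℝ) + 2)) := by
  have h1 : radC k = ∫⁻ r in Set.Ioo (0:ℝ) 1, ENNReal.ofReal (r ^ (k+1)) := by
    unfold radC
    rw [← Set.Ioi_inter_Iio, Set.inter_comm, ← setLIntegral_indicator measurableSet_Iio]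
    refine lintegral_congr fun r => ?_
    simp [Set.indicator]
  rw [h1, Measure.restrict_congr_set Ioo_ae_eq_Ioc,
    ← ofReal_integral_eq_lintegral_ofReal (intervalIntegral.intervalIntegrable_pow _).1,
    ← intervalIntegral.integral_of_le zero_le_one]
  · congr 1
    simp; ring
  · filter_upwards [ae_restrict_mem measurableSet_Ioc] with r hr
    have := hr.1.le
    positivity

lemma lint_sphere {k : ℕ} (hk : 1 ≤ k) (e e' : Eu (k+2)) (he : ‖e‖ = 1) (he' : ‖e'‖ = 1)
    (hee : ⟪e, e'⟫ = 0) (f : ℝ → ℝ → ℝ≥0∞) (hf : Measurable (Function.uncurry f)) :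
    ∫⁻ ω, f ⟪e, (ω : Eu (k+2))⟫ ⟪e', (ω : Eu (k+2))⟫ ∂(volume : Measure (Eu (k+2))).toSphere =
      (volume : Measure (Eu k)).toSphere Set.univ * ∫⁻ φ in Set.Ioo 0 π, ∫⁻ ψ in Set.Ioo 0 π,
        ENNReal.ofReal (sin φ ^ (k-1)) * (ENNReal.ofReal (sin ψ ^ k) * f (cos ψ) (sin ψ * cos φ)) := by
  set h : ℝ → ℝ≥0∞ := (Set.Iio (1:ℝ)).indicator 1 with hh
  have hhm : Measurable h := measurable_one.indicator measurableSet_Iio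
  have hC0 : radC k ≠ 0 := by rw [radC_eq, ne_eq, ENNReal.ofReal_eq_zero]; push Not; positivity
  have hCt : radC k ≠ ⊤ := by rw [radC_eq]; exact ENNReal.ofReal_ne_top
  set H : ℝ → ℝ → ℝ → ℝ≥0∞ := fun a b q => f (a/q) (b/q) * h q with hHd
  have hH : Measurable (fun p : ℝ × ℝ × ℝ => H p.1 p.2.1 p.2.2) := by
    have : Measurable (fun p : ℝ × ℝ × ℝ => f (p.1/p.2.2) (p.2.1/p.2.2)) :=
      hf.comp (f := fun p : ℝ × ℝ × ℝ => (p.1/p.2.2, p.2.1/p.2.2)) (by fun_prop)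
    exact this.mul (hhm.comp (by fun_prop))
  have e1 := lint_ortho e e' he he' hee H hH
  rw [lint_polar] at e1
  swap
  · exact hH.comp (f := fun x : Eu (k+2) => (⟪e,x⟫, ⟪e',x⟫, ‖x‖)) (by fun_prop)
  have e2 : ∀ ω : sphere (0 : Eu (k+2)) 1, (∫⁻ r in Set.Ioi (0:ℝ),
      ENNReal.ofReal (r ^ (Module.finrank ℝ (Eu (k+2)) - 1)) * 
        H ⟪e, r • (ω : Eu (k+2))⟫ ⟪e', r • (ω : Eu (k+2))⟫ ‖r • (ω : Eu (k+2))‖)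
       = f ⟪e, (ω : Eu (k+2))⟫ ⟪e', (ω : Eu (k+2))⟫ * radC k := by
    intro ω
    unfold radC
    rw [← lintegral_const_mul]
    · refine setLIntegral_congr_fun measurableSet_Ioi fun r hr => ?_
      have hr : 0 < r := hr
      have hn : ‖(ω : Eu (k+2))‖ = 1 := by simp
      simp only [finrank_euclideanSpace, Fintype.card_fin, hHd, norm_smul, hn, inner_smul_right, 
        mul_one, Real.norm_eq_abs, abs_of_pos hr, mul_div_cancel_left₀ _ hr.ne']
      rw [show k + 2 - 1 = k + 1 by omega]
      ring
    · exact Measurable.mul (by fun_prop) hhm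
  simp only [e2] at e1
  have hωm : Measurable (fun ω : sphere (0 : Eu (k+2)) 1 => 
      f ⟪e, (ω : Eu (k+2))⟫ ⟪e', (ω : Eu (k+2))⟫) := 
    hf.comp (f := fun ω : sphere (0 : Eu (k+2)) 1 => 
      (⟪e, (ω : Eu (k+2))⟫, ⟪e', (ω : Eu (k+2))⟫)) (by fun_prop)
  rw [lintegral_mul_const _ hωm] at e1
  rw [← ENNReal.mul_left_inj hC0 hCt, e1]
  -- now the right-hand side
  set A := (volume : Measure (Eu k)).toSphere Set.univ
  have e3 : ∀ a b : ℝ, ∫⁻ z : Eu k, H a b (√(a^2+b^2+‖z‖^2)) = 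
      A * ∫⁻ s in Set.Ioi (0:ℝ), ENNReal.ofReal (s ^ (k-1)) * H a b (√(a^2+b^2+s^2)) := by
    intro a b
    exact lint_norm hk (fun s => H a b (√(a^2+b^2+s^2))) 
      (hH.comp (f := fun s : ℝ => (a, b, √(a^2+b^2+s^2))) (by fun_prop))
  simp only [e3]
  have hAt : A ≠ ⊤ := measure_ne_top _ _
  simp only [lintegral_const_mul' _ _ hAt]
  rw [mul_assoc]
  congr 1
  have hH3 : Measurable (fun p : ℝ × ℝ × ℝ => 
      ENNReal.ofReal (p.2.2 ^ (k-1)) * H p.1 p.2.1 (√(p.1^2+p.2.1^2+p.2.2^2))) := 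
    Measurable.mul (by fun_prop) 
      (hH.comp (f := fun p : ℝ × ℝ × ℝ => (p.1, p.2.1, √(p.1^2+p.2.1^2+p.2.2^2))) (by fun_prop))
  have e4 : ∀ a : ℝ, ∫⁻ b, ∫⁻ s in Set.Ioi (0:ℝ), 
      ENNReal.ofReal (s ^ (k-1)) * H a b (√(a^2+b^2+s^2)) = 
      ∫⁻ φ in Set.Ioo 0 π, ∫⁻ τ in Set.Ioi (0:ℝ), ENNReal.ofReal τ * 
       (ENNReal.ofReal ((τ * sin φ) ^ (k-1)) * H a (τ * cos φ) (√(a^2+(τ * cos φ)^2+(τ * sin φ)^2))) := by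
    intro a
    exact lint_half (fun b s => ENNReal.ofReal (s ^ (k-1)) * H a b (√(a^2+b^2+s^2))) 
      (hH3.comp (f := fun p : ℝ × ℝ => (a, p)) (by fun_prop))
  simp only [e4]
  have hH4 : Measurable (fun p : ℝ × ℝ × ℝ => ENNReal.ofReal p.2.2 * 
       (ENNReal.ofReal ((p.2.2 * sin p.2.1) ^ (k-1)) * H p.1 (p.2.2 * cos p.2.1) 
         (√(p.1^2+(p.2.2 * cos p.2.1)^2+(p.2.2 * sin p.2.1)^2)))) := 
    Measurable.mul (by fun_prop) (hH3.comp (f := fun p : ℝ × ℝ × ℝ => 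
      (p.1, p.2.2 * cos p.2.1, p.2.2 * sin p.2.1)) (by fun_prop))
  rw [lintegral_lintegral_swap]
  swap
  · refine Measurable.aemeasurable ?_
    exact Measurable.lintegral_prod_right' (f := fun p : (ℝ × ℝ) × ℝ => ENNReal.ofReal p.2 * 
       (ENNReal.ofReal ((p.2 * sin p.1.2) ^ (k-1)) * H p.1.1 (p.2 * cos p.1.2) 
         (√(p.1.1^2+(p.2 * cos p.1.2)^2+(p.2 * sin p.1.2)^2)))) 
         (hH4.comp (f := fun p : (ℝ × ℝ) × ℝ => (p.1.1, p.1.2, p.2)) (by fun_prop))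
  rw [← lintegral_mul_const' _ _ hCt]
  refine setLIntegral_congr_fun measurableSet_Ioo fun φ hφ => ?_
  have hsφ := sin_pos_of_mem_Ioo hφ
  have e5 := lint_half (fun a τ => ENNReal.ofReal τ * 
       (ENNReal.ofReal ((τ * sin φ) ^ (k-1)) * H a (τ * cos φ) (√(a^2+(τ * cos φ)^2+(τ * sin φ)^2))))
       (hH4.comp (f := fun p : ℝ × ℝ => (p.1, φ, p.2)) (by fun_prop))
  rw [e5, ← lintegral_mul_const' _ _ hCt]
  refine setLIntegral_congr_fun measurableSet_Ioo fun ψ hψ => ?_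
  have hsψ := sin_pos_of_mem_Ioo hψ
  unfold radC
  rw [← lintegral_const_mul _ (f := fun r : ℝ => ENNReal.ofReal (r ^ (k+1)) * (Set.Iio (1:ℝ)).indicator 1 r) 
    (Measurable.mul (by fun_prop) hhm)]
  refine setLIntegral_congr_fun measurableSet_Ioi fun r hr => ?_
  have hr : 0 < r := hr
  have hq : √((r * cos ψ) ^ 2 + (r * sin ψ * cos φ) ^ 2 + (r * sin ψ * sin φ) ^ 2) = r := by
    rw [← Real.sqrt_sq hr.le]
    congr 1
    rw [Real.sqrt_sq hr.le]
    have h1 := sin_sq_add_cos_sq φ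
    have h2 := sin_sq_add_cos_sq ψ
    linear_combination r^2 * sin ψ^2 * h1 + r^2 * h2
  simp only [hHd]
  rw [hq, mul_div_cancel_left₀ _ hr.ne', mul_assoc r (sin ψ) (cos φ), mul_div_cancel_left₀ _ hr.ne', ← hh]
  have : ENNReal.ofReal r * (ENNReal.ofReal (r * sin ψ) * ENNReal.ofReal ((r * sin ψ * sin φ) ^ (k-1)))
    = ENNReal.ofReal (sin φ ^ (k-1)) * (ENNReal.ofReal (sin ψ ^ k) * ENNReal.ofReal (r ^ (k+1))) := by
    obtain ⟨j, rfl⟩ : ∃ j, k = j + 1 := ⟨k-1, by omega⟩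
    rw [← ENNReal.ofReal_mul (by positivity), ← ENNReal.ofReal_mul (by positivity), 
      ← ENNReal.ofReal_mul (by positivity), ← ENNReal.ofReal_mul (by positivity)]
    congr 1
    simp only [Nat.add_sub_cancel]
    ring
  calc _ = (f (cos ψ) (sin ψ * cos φ) * h r) * (ENNReal.ofReal r *
        (ENNReal.ofReal (r * sin ψ) * ENNReal.ofReal ((r * sin ψ * sin φ) ^ (k-1)))) := by ring
    _ = _ := by rw [this]; ring

lemma lint_subst (κ : ℝ) (hκ : 0 < κ) (g : ℝ → ℝ≥0∞) :
    ∫⁻ ψ in Set.Ioo 0 π, g ψ = ∫⁻ θ in Set.Ioo 0 (π/2),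
      ENNReal.ofReal (2 * κ / (cos θ ^ 2 * (1 + (κ * tan θ)^2))) * g (2 * arctan (κ * tan θ)) := by
  have himg : (fun θ => 2 * arctan (κ * tan θ)) '' Set.Ioo 0 (π/2) = Set.Ioo 0 π := by
    ext ψ
    constructor
    · rintro ⟨θ, hθ, rfl⟩
      have ht : 0 < tan θ := tan_pos_of_pos_of_lt_pi_div_two hθ.1 hθ.2
      have h1 : 0 < arctan (κ * tan θ) := arctan_pos.2 (mul_pos hκ ht)
      have h2 := arctan_lt_pi_div_two (κ * tan θ)
      constructor <;> simp only [] <;> linarith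
    · intro hψ
      have ht : 0 < tan (ψ/2) := 
        tan_pos_of_pos_of_lt_pi_div_two (by linarith [hψ.1]) (by linarith [hψ.2])
      refine ⟨arctan (tan (ψ/2) / κ), ⟨arctan_pos.2 (div_pos ht hκ), arctan_lt_pi_div_two _⟩, ?_⟩
      simp only [tan_arctan]
      rw [mul_div_cancel₀ _ hκ.ne', arctan_tan (by linarith [hψ.1, pi_pos]) (by linarith [hψ.2])]
      ring
  have hinj : Set.InjOn (fun θ => 2 * arctan (κ * tan θ)) (Set.Ioo 0 (π/2)) := by
    intro θ hθ θ' hθ' h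
    have h1 : arctan (κ * tan θ) = arctan (κ * tan θ') := by simpa using h
    have h2 := mul_left_cancel₀ hκ.ne' (arctan_injective h1)
    exact injOn_tan ⟨by linarith [hθ.1, pi_pos], hθ.2⟩ ⟨by linarith [hθ'.1, pi_pos], hθ'.2⟩ h2
  rw [← himg, lintegral_image_eq_lintegral_abs_deriv_mul measurableSet_Ioo
    (f' := fun θ => 2 * κ / (cos θ ^ 2 * (1 + (κ * tan θ)^2))) ?_ hinj]
  · refine setLIntegral_congr_fun measurableSet_Ioo fun θ hθ => ?_
    rw [abs_of_nonneg (by positivity)]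
  · intro θ hθ
    have hc : cos θ ≠ 0 := (cos_pos_of_mem_Ioo ⟨by linarith [hθ.1, pi_pos], hθ.2⟩).ne'
    have h := ((((hasDerivAt_tan hc).const_mul κ).arctan).const_mul 2).hasDerivWithinAt (s := Set.Ioo 0 (π/2))
    have : 1 + (κ * tan θ)^2 ≠ 0 := by positivity
    refine h.congr_deriv ?_
    generalize tan θ = u at *
    field_simp

/-- the kernel in terms of the two coordinates -/
def qker (n : ℕ) (r γ a b : ℝ) : ℝ :=
  |(-2 * r + n * (1 - r^2) * (a - r + γ * b) / (1 - 2*r*a + r^2))| / √(1 - 2*r*a + r^2) ^ n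

lemma key_ident (k : ℕ) (r γ θ φ : ℝ) (hr0 : 0 ≤ r) (hr1 : r < 1) (hθ : θ ∈ Set.Ioo 0 (π/2)) :
    let κ := (1-r)/(1+r)
    let ψ := 2 * arctan (κ * tan θ)
    2 * κ / (cos θ ^ 2 * (1 + (κ * tan θ)^2)) * (sin ψ ^ k * qker (k+2) r γ (cos ψ) (sin ψ * cos φ)) =
     2^(k+1) / ((1-r) * (1+r)^(k+1)) * Gfun (k+2) θ φ r γ := by
  intro κ ψ
  have hc : 0 < cos θ := cos_pos_of_mem_Ioo ⟨by linarith [hθ.1, pi_pos], hθ.2⟩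
  have hs : 0 < sin θ := sin_pos_of_mem_Ioo ⟨hθ.1, by linarith [hθ.2, pi_pos]⟩
  have hκ : 0 < κ := div_pos (by linarith) (by linarith)
  have h1r : 0 < 1 - r := by linarith
  have h1r' : 0 < 1 + r := by linarith
  obtain ⟨t, ht⟩ : ∃ t, t = κ * tan θ := ⟨_, rfl⟩
  have hψ : ψ = 2 * arctan t := by rw [ht]
  rw [← ht]
  clear_value ψ
  have htt : t = κ * (sin θ / cos θ) := by rw [ht, tan_eq_sin_div_cos]
  have hsc := sin_sq_add_cos_sq θ
  obtain ⟨w, hw⟩ : ∃ w, w = √(1+t^2) := ⟨_, rfl⟩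
  have hw0 : 0 < w := by rw [hw]; positivity
  have hw2 : w^2 = 1 + t^2 := by rw [hw]; exact Real.sq_sqrt (by positivity)
  have hcos : cos ψ = (1-t^2)/(1+t^2) := by
    rw [hψ, cos_two_mul, cos_sq_arctan]; field_simp; ring
  have hsin : sin ψ = 2*t/(1+t^2) := by
    rw [hψ, sin_two_mul, sin_arctan, cos_arctan, ← hw, ← hw2]; field_simp
  have hD : 1 - 2*r*cos ψ + r^2 = ((1-r)/(cos θ * w))^2 := by
    rw [hcos, div_pow, mul_pow, hw2]
    have : (1 + t^2) ≠ 0 := by positivity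
    field_simp
    rw [htt]
    simp only [κ]
    field_simp
    linear_combination (1 - r)^2 * (1+r)^2 * hsc
  have hsD : √(1 - 2*r*cos ψ + r^2) = (1-r)/(cos θ * w) := by
    rw [hD]; exact Real.sqrt_sq (by positivity)
  have hX : -2 * r + ((k+2 : ℕ) : ℝ) * (1 - r^2) * (cos ψ - r + γ * (sin ψ * cos φ)) / (1 - 2*r*cos ψ + r^2)
     = ((k+2 : ℕ) : ℝ) * γ * Real.sin (2 * θ) * Real.cos φ + ((k+2 : ℕ) : ℝ) * Real.cos (2 * θ) +
      (((k+2 : ℕ) : ℝ) - 2) * r := by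
    have e1 : (1 - r^2) * (cos ψ - r) / (1 - 2*r*cos ψ + r^2) = cos (2*θ) + r := by
      rw [hD, hcos, div_pow, mul_pow, hw2, cos_two_mul]
      have : (1 + t^2) ≠ 0 := by positivity
      field_simp
      rw [htt]
      simp only [κ]
      field_simp
      linear_combination (r^2-1) * (1 - r)^2 * (1+r) * hsc
    have e2 : (1 - r^2) * sin ψ / (1 - 2*r*cos ψ + r^2) = sin (2*θ) := by
      rw [hD, hsin, div_pow, mul_pow, hw2, sin_two_mul]
      have : (1 + t^2) ≠ 0 := by positivity
      field_simp
      rw [htt]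
      simp only [κ]
      field_simp
      ring
    linear_combination ((k+2 : ℕ) : ℝ) * e1 + ((k+2 : ℕ) : ℝ) * γ * cos φ * e2
  unfold qker Gfun
  rw [hX, hsD, hsin]
  have hpow : (1 + ((1 - r) / (1 + r)) ^ 2 * Real.tan θ ^ 2) ^ ((((k+2 : ℕ) : ℝ) - 2) / 2) = w^k := by
    have : (1 + ((1 - r) / (1 + r)) ^ 2 * Real.tan θ ^ 2) = 1 + t^2 := by rw [ht]; ring
    rw [this, hw, ← Real.rpow_natCast _ k, Real.sqrt_eq_rpow, ← Real.rpow_mul (by positivity)]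
    congr 1
    push_cast; ring
  rw [hpow, show k + 2 - 2 = k by omega, ← hw2]
  set X := |((k+2 : ℕ) : ℝ) * γ * Real.sin (2 * θ) * Real.cos φ + ((k+2 : ℕ) : ℝ) * Real.cos (2 * θ) +
      (((k+2 : ℕ) : ℝ) - 2) * r|
  have hk1 : 2 * κ / (cos θ ^ 2 * w ^ 2) * ((2 * t / w ^ 2) ^ k * (X / ((1 - r) / (cos θ * w)) ^ (k + 2)))
    = 2^(k+1) * κ * (cos θ * t)^k * X / ((1-r)^(k+2) * w^k) := by
    simp only [div_pow, mul_pow]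
    field_simp
    ring
  have hk2 : cos θ * t = κ * sin θ := by rw [htt]; field_simp
  rw [hk1, hk2]
  simp only [κ, div_pow, mul_pow]
  field_simp
  try ring


lemma Gfun_meas (n : ℕ) (r γ : ℝ) : Measurable (fun p : ℝ × ℝ => Gfun n p.2 p.1 r γ) := by
  unfold Gfun
  simp only [tan_eq_sin_div_cos]
  fun_prop

lemma Gfun_nonneg (n : ℕ) (r γ θ φ : ℝ) (hθ : θ ∈ Set.Icc 0 π) : 0 ≤ Gfun n θ φ r γ := by
  unfold Gfun
  have := sin_nonneg_of_mem_Icc hθ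
  positivity

lemma Gfun_le (n : ℕ) (hn : 2 ≤ n) (r γ θ φ : ℝ) (hr : 0 ≤ r) (hγ : 0 ≤ γ) : 
    |Gfun n θ φ r γ| ≤ n * γ + n + n * r := by
  unfold Gfun
  have hn' : (2:ℝ) ≤ n := by exact_mod_cast hn
  set d := (1 + ((1 - r) / (1 + r)) ^ 2 * Real.tan θ ^ 2) ^ (((n : ℝ) - 2) / 2)
  have hd : 1 ≤ d := Real.one_le_rpow (by nlinarith [sq_nonneg ((1 - r) / (1 + r) * tan θ)]) (by linarith)
  rw [abs_div, abs_mul, abs_abs, abs_pow, abs_of_pos (by linarith : 0 < d)]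
  refine (div_le_self (by positivity) hd).trans ?_
  have h1 : |sin θ| ^ (n-2) ≤ 1 := pow_le_one₀ (abs_nonneg _) (abs_sin_le_one _)
  refine (mul_le_of_le_one_right (abs_nonneg _) h1).trans ?_
  refine (abs_add_three _ _ _).trans ?_
  simp only [abs_mul, abs_of_nonneg hr, abs_of_nonneg hγ, Nat.abs_cast]
  rw [abs_of_nonneg (by linarith : (0:ℝ) ≤ n - 2)]
  have a1 : |sin (2*θ)| * |cos φ| ≤ 1 := 
    mul_le_one₀ (abs_sin_le_one _) (abs_nonneg _) (abs_cos_le_one _)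
  have a2 := abs_cos_le_one (2*θ)
  have b1 : n * γ * |sin (2*θ)| * |cos φ| ≤ n * γ := by
    rw [mul_assoc]; exact mul_le_of_le_one_right (by positivity) a1
  have b2 : n * |cos (2*θ)| ≤ n := mul_le_of_le_one_right (by positivity) a2
  have b3 : ((n:ℝ) - 2) * r ≤ n * r := mul_le_mul_of_nonneg_right (by linarith) hr
  linarith

def Jint (n : ℕ) (r γ : ℝ) : ℝ :=
  ∫ φ in (0:ℝ)..π, Real.sin φ ^ (n - 3) * ∫ θ in (0:ℝ)..(π / 2), Gfun n θ φ r γ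

lemma inner_nonneg' (n : ℕ) (r γ φ : ℝ) : 0 ≤ ∫ θ in (0:ℝ)..(π / 2), Gfun n θ φ r γ := by
  refine intervalIntegral.integral_nonneg (by positivity) fun θ hθ => ?_
  exact Gfun_nonneg _ _ _ _ _ ⟨hθ.1, by linarith [hθ.2, pi_pos]⟩

lemma Jint_nonneg (n : ℕ) (r γ : ℝ) : 0 ≤ Jint n r γ := by
  refine intervalIntegral.integral_nonneg (by positivity) fun θ hθ => ?_
  have := sin_nonneg_of_mem_Icc hθ
  have := inner_nonneg' n r γ θ
  positivity

lemma inner_le' (n : ℕ) (hn : 2 ≤ n) (r γ φ : ℝ) (hr : 0 ≤ r) (hγ : 0 ≤ γ) : 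
    |∫ θ in (0:ℝ)..(π / 2), Gfun n θ φ r γ| ≤ (n * γ + n + n * r) * (π/2) := by
  have := intervalIntegral.norm_integral_le_of_norm_le_const (a := 0) (b := π/2) 
    (f := fun θ => Gfun n θ φ r γ) (C := n * γ + n + n * r) 
    (fun θ _ => Gfun_le n hn r γ θ φ hr hγ)
  simpa [abs_of_pos (by positivity : 0 < π/2)] using this

lemma outer_le' (n : ℕ) (hn : 2 ≤ n) (r γ φ : ℝ) (hr : 0 ≤ r) (hγ : 0 ≤ γ) : 
    ‖Real.sin φ ^ (n - 3) * ∫ θ in (0:ℝ)..(π / 2), Gfun n θ φ r γ‖ ≤ (n * γ + n + n * r) * (π/2) := by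
  rw [norm_mul, norm_pow]
  have h1 : ‖sin φ‖ ^ (n-3) ≤ 1 := pow_le_one₀ (norm_nonneg _) (abs_sin_le_one _)
  exact (mul_le_of_le_one_left (norm_nonneg _) h1).trans (inner_le' n hn r γ φ hr hγ)

lemma Jint_le (n : ℕ) (hn : 2 ≤ n) (r γ : ℝ) (hr : 0 ≤ r) (hγ : 0 ≤ γ) : 
    Jint n r γ ≤ (n * γ + n + n * r) * (π/2) * π := by
  have := intervalIntegral.norm_integral_le_of_norm_le_const (a := 0) (b := π) 
    (f := fun φ => Real.sin φ ^ (n - 3) * ∫ θ in (0:ℝ)..(π / 2), Gfun n θ φ r γ)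
    (fun φ _ => outer_le' n hn r γ φ hr hγ)
  rw [sub_zero, abs_of_pos pi_pos] at this
  exact (le_abs_self _).trans this

lemma Jint_lint (n : ℕ) (hn : 2 ≤ n) (r γ : ℝ) (hr : 0 ≤ r) (hγ : 0 ≤ γ) : 
    ENNReal.ofReal (Jint n r γ) = ∫⁻ φ in Set.Ioo 0 π, ∫⁻ θ in Set.Ioo 0 (π/2),
      ENNReal.ofReal (sin φ ^ (n-3)) * ENNReal.ofReal (Gfun n θ φ r γ) := by
  have hin : ∀ φ, ENNReal.ofReal (∫ θ in (0:ℝ)..(π / 2), Gfun n θ φ r γ) = 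
      ∫⁻ θ in Set.Ioo 0 (π/2), ENNReal.ofReal (Gfun n θ φ r γ) := by
    intro φ
    have hm : Measurable (fun θ => Gfun n θ φ r γ) := 
      (Gfun_meas n r γ).comp (f := fun θ => (φ, θ)) (by fun_prop)
    rw [intervalIntegral.integral_of_le (by positivity), ← Measure.restrict_congr_set Ioo_ae_eq_Ioc, 
      ofReal_integral_eq_lintegral_ofReal]
    · exact Measure.integrableOn_of_bounded (by simp) hm.aestronglyMeasurable 
        (M := n * γ + n + n * r) (ae_of_all _ fun θ => Gfun_le n hn r γ θ φ hr hγ)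
    · filter_upwards [ae_restrict_mem measurableSet_Ioo] with θ hθ
      exact Gfun_nonneg _ _ _ _ _ ⟨hθ.1.le, by linarith [hθ.2, pi_pos]⟩
  have hm2 : Measurable (fun φ => ∫ θ in (0:ℝ)..(π / 2), Gfun n θ φ r γ) := by
    simp only [intervalIntegral.integral_of_le (by positivity : (0:ℝ) ≤ π/2)]
    exact ((Gfun_meas n r γ).stronglyMeasurable.integral_prod_right').measurable
  unfold Jint
  rw [intervalIntegral.integral_of_le (by positivity), ← Measure.restrict_congr_set Ioo_ae_eq_Ioc, 
      ofReal_integral_eq_lintegral_ofReal]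
  · refine setLIntegral_congr_fun measurableSet_Ioo fun φ hφ => ?_
    have := sin_pos_of_mem_Ioo hφ
    rw [ENNReal.ofReal_mul (by positivity), hin, lintegral_const_mul' _ _ ENNReal.ofReal_ne_top]
  · exact Measure.integrableOn_of_bounded (by simp) (Measurable.aestronglyMeasurable (by fun_prop))
        (M := (n * γ + n + n * r) * (π/2)) (ae_of_all _ fun φ => outer_le' n hn r γ φ hr hγ)
  · filter_upwards [ae_restrict_mem measurableSet_Ioo] with φ hφ
    have := sin_pos_of_mem_Ioo hφ
    have := inner_nonneg' n r γ φ
    simp only [Pi.zero_apply]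
    positivity

lemma qker_meas (n : ℕ) (r γ : ℝ) : Measurable (Function.uncurry (qker n r γ)) := by
  unfold qker Function.uncurry
  fun_prop

lemma qker_nonneg (n : ℕ) (r γ a b : ℝ) : 0 ≤ qker n r γ a b := by
  unfold qker
  positivity

lemma sphere_qker {k : ℕ} (hk : 1 ≤ k) (e e' : Eu (k+2)) (he : ‖e‖ = 1) (he' : ‖e'‖ = 1)
    (hee : ⟪e, e'⟫ = 0) (r γ : ℝ) (hr0 : 0 ≤ r) (hr1 : r < 1) (hγ : 0 ≤ γ) :
    ∫ ω, qker (k+2) r γ ⟪e, (ω : Eu (k+2))⟫ ⟪e', (ω : Eu (k+2))⟫ ∂(volume : Measure (Eu (k+2))).toSphere =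
      ((volume : Measure (Eu k)).toSphere Set.univ).toReal * 
        (2^(k+1) / ((1-r) * (1+r)^(k+1)) * Jint (k+2) r γ) := by
  have h1r : 0 < 1 - r := by linarith
  rw [integral_eq_lintegral_of_nonneg_ae (ae_of_all _ fun ω => qker_nonneg _ _ _ _ _)
    (Measurable.aestronglyMeasurable ((qker_meas (k+2) r γ).comp 
      (f := fun ω : sphere (0 : Eu (k+2)) 1 => (⟪e, (ω : Eu (k+2))⟫, ⟪e', (ω : Eu (k+2))⟫)) (by fun_prop)))]
  rw [lint_sphere hk e e' he he' hee (fun a b => ENNReal.ofReal (qker (k+2) r γ a b)) 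
    (qker_meas _ _ _).ennreal_ofReal, ENNReal.toReal_mul]
  congr 1
  have hJ := Jint_nonneg (k+2) r γ
  rw [← ENNReal.toReal_ofReal (mul_nonneg (by positivity) hJ)]
  congr 1
  rw [ENNReal.ofReal_mul (by positivity), Jint_lint (k+2) (by omega) r γ hr0 hγ, 
    ← lintegral_const_mul' _ _ ENNReal.ofReal_ne_top]
  refine setLIntegral_congr_fun measurableSet_Ioo fun φ hφ => ?_
  rw [lintegral_const_mul' _ _ ENNReal.ofReal_ne_top, lintegral_const_mul' _ _ ENNReal.ofReal_ne_top,
    lint_subst ((1-r)/(1+r)) (by positivity)]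
  rw [← mul_assoc, mul_comm (ENNReal.ofReal (2^(k+1) / ((1-r) * (1+r)^(k+1)))), mul_assoc, 
    ← lintegral_const_mul' (ENNReal.ofReal (2^(k+1) / ((1-r) * (1+r)^(k+1)))) _ ENNReal.ofReal_ne_top,
    show k + 2 - 3 = k - 1 by omega]
  congr 1
  refine setLIntegral_congr_fun measurableSet_Ioo fun θ hθ => ?_
  have hid := key_ident k r γ θ φ hr0 hr1 hθ
  simp only [] at hid ⊢
  have ht : 0 < tan θ := tan_pos_of_pos_of_lt_pi_div_two hθ.1 hθ.2
  have hs : 0 ≤ sin (2 * arctan ((1 - r) / (1 + r) * tan θ)) := by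
    have h1 : 0 < arctan ((1 - r) / (1 + r) * tan θ) := arctan_pos.2 (by positivity)
    have h2 := arctan_lt_pi_div_two ((1 - r) / (1 + r) * tan θ)
    exact sin_nonneg_of_nonneg_of_le_pi (by linarith) (by linarith)
  rw [← ENNReal.ofReal_mul (by positivity), ← ENNReal.ofReal_mul (by positivity), 
    ← ENNReal.ofReal_mul (by positivity), hid]

lemma area_ratio {k : ℕ} (hk : 1 ≤ k) : ((volume : Measure (Eu k)).toSphere Set.univ).toReal =
    sphereArea (k+2) * (k / (2 * π)) := by
  have : Nonempty (Fin k) := ⟨⟨0, hk⟩⟩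
  rw [Measure.toSphere_apply_univ, EuclideanSpace.volume_ball]
  simp only [finrank_euclideanSpace, Fintype.card_fin, sphereArea]
  rw [ENNReal.toReal_mul, ENNReal.toReal_mul]
  have hG : 0 < Real.Gamma ((k:ℝ)/2 + 1) := Real.Gamma_pos_of_pos (by positivity)
  rw [ENNReal.toReal_ofReal (by positivity)]
  have h1 : (((k+2:ℕ):ℝ)/2) = (k:ℝ)/2 + 1 := by push_cast; ring
  rw [h1, Real.rpow_add pi_pos, Real.rpow_one]
  have h2 : √π ^ k = π ^ ((k:ℝ)/2) := by
    rw [Real.sqrt_eq_rpow, ← Real.rpow_natCast, ← Real.rpow_mul pi_pos.le]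
    congr 1; ring
  rw [h2]
  simp
  field_simp

lemma sphereArea_pos (k : ℕ) : 0 < sphereArea (k+2) := by
  unfold sphereArea
  have hG : 0 < Real.Gamma (((k+2:ℕ):ℝ)/2) := Real.Gamma_pos_of_pos (by positivity)
  positivity


/-- gradient in `x` of the Poisson kernel -/
def Kvec {n : ℕ} (R : ℝ) (x y : Eu n) : Eu n :=
  (-2 / ‖y - x‖ ^ n) • x + (n * (R^2 - ‖x‖^2) / ‖y - x‖ ^ (n+2)) • (y - x)

lemma kernel_fderiv {k : ℕ} (R : ℝ) (x y : Eu (k+2)) (hxy : y - x ≠ 0) :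
    HasFDerivAt (fun x : Eu (k+2) => (R ^ 2 - ‖x‖ ^ 2) / ‖y - x‖ ^ (k+2)) (innerSL ℝ (Kvec R x y)) x := by
  have hN0 : 0 < ‖y - x‖ := norm_pos_iff.2 hxy
  have h1 : HasFDerivAt (fun x : Eu (k+2) => R^2 - ‖x‖^2) (-(2 • innerSL ℝ x)) x := 
    ((hasStrictFDerivAt_norm_sq x).hasFDerivAt).const_sub (R^2)
  have h2 : HasFDerivAt (fun x : Eu (k+2) => ‖y - x‖^2) 
      ((2 • innerSL ℝ (y - x)).comp (-(ContinuousLinearMap.id ℝ (Eu (k+2))))) x := 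
    (hasStrictFDerivAt_norm_sq (y - x)).hasFDerivAt.comp x ((hasFDerivAt_id x).const_sub y)
  have h3 := h2.sqrt (by positivity)
  simp only [Real.sqrt_sq (norm_nonneg _)] at h3
  have h4 : HasDerivAt (fun s : ℝ => (s^(k+2))⁻¹) (-(((k+2 : ℕ) : ℝ) * ‖y - x‖^(k+1)) / (‖y - x‖^(k+2))^2) ‖y - x‖ := by
    have := (hasDerivAt_pow (k+2) ‖y - x‖).inv (by positivity)
    exact this
  have h5 := h1.mul (h4.comp_hasFDerivAt x h3)
  refine (h5.congr_fderiv ?_)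
  ext v
  simp [Kvec, inner_add_left, inner_smul_left, inner_neg_right]
  field_simp
  ring

lemma Kvec_bound {k : ℕ} (R δ : ℝ) (x y : Eu (k+2)) (hx : ‖x‖ ≤ R) (hy : ‖y‖ = R)
    (hδ : 0 < δ) (hxy : δ ≤ ‖y - x‖) : 
    ‖Kvec R x y‖ ≤ 2 / δ^(k+2) * R + ((k+2 : ℕ) : ℝ) * R^2 / δ^(k+4) * (2*R) := by
  have hR : 0 ≤ R := (norm_nonneg x).trans hx
  unfold Kvec
  refine (norm_add_le _ _).trans ?_
  rw [norm_smul, norm_smul]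
  have hN0 : 0 < ‖y - x‖ := hδ.trans_le hxy
  have hx2 : ‖x‖^2 ≤ R^2 := by gcongr
  have h1 : ‖y - x‖ ≤ 2 * R := (norm_sub_le _ _).trans (by linarith)
  rw [norm_div, norm_div, norm_pow, norm_pow, norm_norm]
  have h2 : ‖((k+2 : ℕ) : ℝ) * (R^2 - ‖x‖^2)‖ ≤ ((k+2 : ℕ) : ℝ) * R^2 := by
    rw [Real.norm_of_nonneg (mul_nonneg (by positivity) (by linarith))]
    gcongr
    linarith [sq_nonneg ‖x‖]
  have h3 : ‖(-2:ℝ)‖ = 2 := by norm_num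
  rw [h3]
  gcongr

instance sphereMeasureR_finite (n : ℕ) (R : ℝ) (hR : 0 < R) : IsFiniteMeasure (sphereMeasureR n R hR) := by
  unfold sphereMeasureR
  have : IsFiniteMeasure ((ENNReal.ofReal (R ^ (n - 1))) • ((volume : Measure (Eu n)).toSphere)) :=
    Measure.smul_finite _ ENNReal.ofReal_ne_top
  infer_instance

lemma Kvec_meas {n : ℕ} (R : ℝ) (x : Eu n) : 
    Measurable (fun y : sphere (0 : Eu n) R => Kvec R x (y : Eu n)) := by
  unfold Kvec
  fun_prop

lemma dist_bound {n : ℕ} (R : ℝ) (x : Eu n) (y : sphere (0 : Eu n) R) : R - ‖x‖ ≤ ‖(y : Eu n) - x‖ := by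
  have hy : ‖(y : Eu n)‖ = R := by simp
  have := norm_sub_norm_le (y : Eu n) x
  linarith

lemma Kvec_inner_integrable {k : ℕ} (R : ℝ) (hR : 0 < R) (x v : Eu (k+2)) (hx : ‖x‖ < R) :
    Integrable (fun y : sphere (0 : Eu (k+2)) R => ⟪Kvec R x (y : Eu (k+2)), v⟫) (sphereMeasureR (k+2) R hR) := by
  refine Integrable.of_bound (C := (2 / (R - ‖x‖)^(k+2) * R + ((k+2 : ℕ) : ℝ) * R^2 / (R - ‖x‖)^(k+4) * (2*R)) * ‖v‖) ?_ ?_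
  · have := Kvec_meas R x
    exact Measurable.aestronglyMeasurable (by fun_prop)
  · refine ae_of_all _ fun y => ?_
    refine (norm_inner_le_norm _ _).trans ?_
    gcongr
    exact Kvec_bound R _ x y hx.le (by simp) (by linarith) (dist_bound R x y)

lemma gradient_inner {k : ℕ} (R : ℝ) (hR : 0 < R) (x : Eu (k+2)) (hx : ‖x‖ < R) 
    (g : sphere (0 : Eu (k+2)) R → ℝ) (hg : Measurable g) 
    (hg1 : ∀ᵐ y ∂(sphereMeasureR (k+2) R hR), |g y| ≤ 1) (v : Eu (k+2)) :
    ⟪gradient (poissonBallR R hR g) x, v⟫ = (1 / (sphereArea (k+2) * R)) * 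
      ∫ y, ⟪Kvec R x (y : Eu (k+2)), v⟫ * g y ∂(sphereMeasureR (k+2) R hR) := by
  set μ := sphereMeasureR (k+2) R hR
  set δ := (R - ‖x‖)/2 with hδ
  have hδ0 : 0 < δ := by rw [hδ]; linarith
  set C := (2 / δ^(k+2) * R + ((k+2 : ℕ) : ℝ) * R^2 / δ^(k+4) * (2*R))
  have hball : ∀ z ∈ ball x δ, ‖z‖ < R ∧ δ ≤ R - ‖z‖ := by
    intro z hz
    have h1 : ‖z - x‖ < δ := by simpa [dist_eq_norm] using hz
    have h2 : ‖z‖ ≤ ‖z - x‖ + ‖x‖ := by simpa using norm_add_le (z - x) x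
    constructor <;> linarith
  have hxb : x ∈ ball x δ := mem_ball_self hδ0
  have hF'b : ∀ᵐ y ∂μ, ∀ z ∈ ball x δ, ‖g y • innerSL ℝ (Kvec R z (y : Eu (k+2)))‖ ≤ C := by
    filter_upwards [hg1] with y hy z hz
    rw [norm_smul, innerSL_apply_norm]
    refine (mul_le_of_le_one_left (norm_nonneg _) hy).trans ?_
    exact Kvec_bound R δ z y (hball z hz).1.le (by simp) hδ0 ((hball z hz).2.trans (dist_bound R z y))
  have hF'm : AEStronglyMeasurable (fun y : sphere (0 : Eu (k+2)) R => 
      g y • innerSL ℝ (Kvec R x (y : Eu (k+2)))) μ := by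
    refine hg.aestronglyMeasurable.smul ?_
    exact (innerSL ℝ (E := Eu (k+2))).continuous.comp_aestronglyMeasurable (Kvec_meas R x).aestronglyMeasurable
  have hFm : ∀ z : Eu (k+2), AEStronglyMeasurable (fun y : sphere (0 : Eu (k+2)) R => 
      ((R ^ 2 - ‖z‖ ^ 2) / ‖(y : Eu (k+2)) - z‖ ^ (k+2)) * g y) μ := by
    intro z
    exact Measurable.aestronglyMeasurable (by fun_prop)
  have hD := hasFDerivAt_integral_of_dominated_of_fderiv_le (𝕜 := ℝ) (μ := μ) (x₀ := x) 
    (F := fun z (y : sphere (0 : Eu (k+2)) R) => ((R ^ 2 - ‖z‖ ^ 2) / ‖(y : Eu (k+2)) - z‖ ^ (k+2)) * g y)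
    (F' := fun z y => g y • innerSL ℝ (Kvec R z (y : Eu (k+2)))) (s := ball x δ) (bound := fun _ => C)
    (ball_mem_nhds x hδ0) (Eventually.of_forall hFm) ?_ hF'm hF'b (integrable_const _) ?_
  rotate_left
  · refine Integrable.of_bound (C := R^2 / (R - ‖x‖)^(k+2)) (hFm x) ?_
    filter_upwards [hg1] with y hy
    rw [norm_mul]
    refine (mul_le_of_le_one_right (norm_nonneg _) hy).trans ?_
    have hx2 : ‖x‖^2 ≤ R^2 := by gcongr
    have h0 : 0 < R - ‖x‖ := by linarith
    rw [Real.norm_of_nonneg (div_nonneg (by linarith) (by positivity))]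
    have := dist_bound R x y
    gcongr
    linarith [sq_nonneg ‖x‖]
  · refine ae_of_all _ fun y z hz => ?_
    have h1 : (y : Eu (k+2)) - z ≠ 0 := by
      have h2 := dist_bound R z y
      have h3 := hball z hz
      exact norm_pos_iff.1 (by linarith)
    exact (kernel_fderiv R z y h1).mul_const (g y)
  have hD2 := hD.const_mul (1 / (sphereArea (k+2) * R))
  have hD3 : fderiv ℝ (poissonBallR R hR g) x = _ := hD2.fderiv
  rw [gradient, InnerProductSpace.toDual_symm_apply, hD3]
  have hint : Integrable (fun y : sphere (0 : Eu (k+2)) R => g y • innerSL ℝ (Kvec R x (y : Eu (k+2)))) μ :=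
    Integrable.of_bound (C := C) hF'm (hF'b.mono fun y hy => hy x hxb)
  rw [ContinuousLinearMap.smul_apply, ContinuousLinearMap.integral_apply hint, smul_eq_mul]
  congr 2
  ext y
  simp [mul_comm]

lemma Kvec_qker {k : ℕ} (R : ℝ) (hR : 0 < R) (e e' ω : Eu (k+2)) (he : ‖e‖ = 1) 
    (hee : ⟪e, e'⟫ = 0) (hω : ‖ω‖ = 1) (r γ : ℝ) (hr0 : 0 ≤ r) (hr1 : r < 1) :
    |⟪Kvec R ((R * r) • e) (R • ω), e + γ • e'⟫| = 
      (R^(k+1))⁻¹ * qker (k+2) r γ ⟪e, ω⟫ ⟪e', ω⟫ := by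
  set a := ⟪e, ω⟫ with ha
  set b := ⟪e', ω⟫ with hb
  have ha' : ⟪ω, e⟫ = a := real_inner_comm _ _
  have hb' : ⟪ω, e'⟫ = b := real_inner_comm _ _
  have hee1 : ⟪e, e⟫ = 1 := by rw [real_inner_self_eq_norm_sq, he]; norm_num
  have ha1 : a ≤ 1 := by
    have := real_inner_le_norm e ω
    rw [he, hω] at this; linarith
  have hD : 0 < 1 - 2*r*a + r^2 := by nlinarith [sq_nonneg (1 - r), mul_nonneg hr0 (by linarith : 0 ≤ 1 - a)]
  obtain ⟨s, hs⟩ : ∃ s, s = √(1 - 2*r*a + r^2) := ⟨_, rfl⟩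
  have hs0 : 0 < s := by rw [hs]; positivity
  have hs2 : s^2 = 1 - 2*r*a + r^2 := by rw [hs]; exact Real.sq_sqrt hD.le
  have hN : ‖R • ω - (R * r) • e‖ = R * s := by
    rw [mul_smul, ← smul_sub, norm_smul, Real.norm_of_nonneg hR.le, hs]
    congr 1
    rw [eq_comm, Real.sqrt_eq_iff_eq_sq hD.le (norm_nonneg _), norm_sub_sq_real, hω, norm_smul, he, 
      inner_smul_right, ha', Real.norm_of_nonneg hr0]
    ring
  have hxn : ‖(R * r) • e‖ = R * r := by
    rw [norm_smul, he, Real.norm_of_nonneg (by positivity), mul_one]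
  have key : ⟪Kvec R ((R * r) • e) (R • ω), e + γ • e'⟫ = 
    (R^(k+1))⁻¹ * ((-2 * r + ((k+2 : ℕ) : ℝ) * (1 - r^2) * (a - r + γ * b) / s^2) / s^(k+2)) := by
    unfold Kvec
    rw [hN, hxn]
    simp only [inner_add_left, inner_add_right, inner_smul_left, inner_smul_right, inner_sub_left, 
      hee1, hee, ha', hb', RCLike.conj_to_real]
    field_simp
    ring
  rw [key]
  unfold qker
  rw [← hs2, Real.sqrt_sq hs0.le, abs_mul, abs_div, abs_of_pos (by positivity : 0 < (R^(k+1))⁻¹),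
    abs_of_pos (by positivity : 0 < s^(k+2))]

lemma M_eq {k : ℕ} (hk : 1 ≤ k) (R : ℝ) (hR : 0 < R) (e e' x : Eu (k+2)) (he : ‖e‖ = 1) (he' : ‖e'‖ = 1)
    (hee : ⟪e, e'⟫ = 0) (hx : ‖x‖ < R) (hxe : x = ‖x‖ • e) (γ : ℝ) (hγ : 0 ≤ γ) :
    (1 / (sphereArea (k+2) * R)) * 
      ∫ y, |⟪Kvec R x (y : Eu (k+2)), e + γ • e'⟫| ∂(sphereMeasureR (k+2) R hR) = 
    (2 ^ k * (k : ℝ) * R ^ (k+1) / (π * (R + ‖x‖) ^ (k+1) * (R - ‖x‖))) * Jint (k+2) (‖x‖ / R) γ := by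
  set r := ‖x‖ / R with hr
  have hr0 : 0 ≤ r := by positivity
  have hr1 : r < 1 := (div_lt_one hR).2 hx
  have hxr : ‖x‖ = R * r := by rw [hr]; field_simp
  have hxe' : x = (R * r) • e := by rw [← hxr]; exact hxe
  have hsc : Measurable (sphereScale (k+2) R hR) := by
    unfold sphereScale
    exact Measurable.subtype_mk (by fun_prop)
  have hmeas : Measurable (fun y : sphere (0 : Eu (k+2)) R => |⟪Kvec R x (y : Eu (k+2)), e + γ • e'⟫|) := by
    have := Kvec_meas R x
    fun_prop
  unfold sphereMeasureR
  rw [integral_map hsc.aemeasurable hmeas.aestronglyMeasurable, integral_smul_measure, 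
    ENNReal.toReal_ofReal (by positivity)]
  have hpt : ∀ ω : sphere (0 : Eu (k+2)) 1, 
    |⟪Kvec R x (sphereScale (k+2) R hR ω : Eu (k+2)), e + γ • e'⟫| = 
     (R^(k+1))⁻¹ * qker (k+2) r γ ⟪e, (ω : Eu (k+2))⟫ ⟪e', (ω : Eu (k+2))⟫ := by
    intro ω
    rw [← Kvec_qker R hR e e' ω he hee (by simp) r γ hr0 hr1, ← hxe']
    rfl
  simp only [hpt]
  rw [integral_const_mul, sphere_qker hk e e' he he' hee r γ hr0 hr1 hγ, area_ratio hk, hxr]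
  have hA := sphereArea_pos k
  have h1r : 0 < 1 - r := by linarith
  rw [show R + R * r = R * (1 + r) by ring, show R - R * r = R * (1 - r) by ring, mul_pow, 
    show k + 2 - 1 = k + 1 by omega]
  simp only [smul_eq_mul]
  field_simp
  try ring


lemma exists_unit_perp {k : ℕ} (e : Eu (k+2)) : ∃ e' : Eu (k+2), ‖e'‖ = 1 ∧ ⟪e, e'⟫ = 0 := by
  have h : (Submodule.span ℝ {e})ᗮ ≠ ⊥ := by
    intro h
    rw [Submodule.orthogonal_eq_bot_iff] at h
    have h1 := finrank_span_le_card (R := ℝ) ({e} : Set (Eu (k+2)))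
    rw [h] at h1
    simp at h1
  obtain ⟨w, hw, hw0⟩ := Submodule.exists_mem_ne_zero_of_ne_bot h
  rw [Submodule.mem_orthogonal_singleton_iff_inner_right] at hw
  refine ⟨‖w‖⁻¹ • w, ?_, ?_⟩
  · rw [norm_smul, norm_inv, norm_norm, inv_mul_cancel₀ (norm_ne_zero_iff.2 hw0)]
  · rw [inner_smul_right, hw, mul_zero]

lemma exists_unit_perp_dir {k : ℕ} (e w : Eu (k+2)) (h : ⟪e, w⟫ = 0) :
    ∃ e' : Eu (k+2), ‖e'‖ = 1 ∧ ⟪e, e'⟫ = 0 ∧ w = ‖w‖ • e' := by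
  by_cases hw : w = 0
  · obtain ⟨e', h1, h2⟩ := exists_unit_perp e
    exact ⟨e', h1, h2, by simp [hw]⟩
  · have hn := norm_ne_zero_iff.2 hw
    refine ⟨‖w‖⁻¹ • w, ?_, ?_, ?_⟩
    · rw [norm_smul, norm_inv, norm_norm, inv_mul_cancel₀ hn]
    · rw [inner_smul_right, h, mul_zero]
    · rw [smul_smul, mul_inv_cancel₀ hn, one_smul]

lemma exists_unit_dir {k : ℕ} (x : Eu (k+2)) : ∃ e : Eu (k+2), ‖e‖ = 1 ∧ x = ‖x‖ • e := by
  obtain ⟨e, h1, _, h3⟩ := exists_unit_perp_dir (0 : Eu (k+2)) x (by simp)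
  exact ⟨e, h1, h3⟩

/-- The prefactor of the formula. -/
def Pfac (k : ℕ) (R ρ : ℝ) : ℝ := 2 ^ k * (k : ℝ) * R ^ (k+1) / (π * (R + ρ) ^ (k+1) * (R - ρ))

lemma Pfac_pos {k : ℕ} (hk : 1 ≤ k) {R ρ : ℝ} (hR : 0 < R) (h0 : 0 ≤ ρ) (h1 : ρ < R) : 0 < Pfac k R ρ := by
  unfold Pfac
  have : 0 < R - ρ := by linarith
  have : (0:ℝ) < k := by exact_mod_cast hk
  positivity

/-- The supremum in the formula. -/
def Ssup (n : ℕ) (r : ℝ) : ℝ := ⨆ γ ∈ Set.Ici (0 : ℝ), (1 / Real.sqrt (1 + γ ^ 2)) * Jint n r γ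

lemma Kcoef_eq (k : ℕ) (R ρ : ℝ) : KcoefR (k+2) R ρ = Pfac k R ρ * Ssup (k+2) (ρ / R) := by
  unfold KcoefR Pfac Ssup Jint
  have h : ((k+2 : ℕ) : ℝ) - 2 = k := by push_cast; ring
  rw [h]
  rfl

lemma fterm_le (n : ℕ) (hn : 2 ≤ n) (r γ : ℝ) (hr : 0 ≤ r) (hγ : 0 ≤ γ) :
    (1 / Real.sqrt (1 + γ ^ 2)) * Jint n r γ ≤ (n + n + n * r) * (π/2) * π := by
  have h1 : 1 ≤ √(1 + γ^2) := Real.one_le_sqrt.2 (by nlinarith [sq_nonneg γ])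
  have h2 : γ ≤ √(1 + γ^2) := Real.le_sqrt_of_sq_le (by linarith)
  rw [div_mul_eq_mul_div, one_mul, div_le_iff₀ (by linarith)]
  refine (Jint_le n hn r γ hr hγ).trans ?_
  have h3 : (n:ℝ) * γ + n + n * r ≤ (n + n + n * r) * √(1 + γ^2) := by
    have hn0 : (0:ℝ) ≤ n := by positivity
    have : 0 ≤ (n:ℝ) * r := by positivity
    nlinarith [mul_le_mul_of_nonneg_left h2 hn0, mul_le_mul_of_nonneg_left h1 hn0,
      mul_le_mul_of_nonneg_left h1 this]
  calc _ ≤ ((n + n + n * r) * √(1 + γ^2)) * (π/2) * π := by gcongr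
    _ = _ := by ring

lemma le_Ssup (n : ℕ) (hn : 2 ≤ n) (r γ : ℝ) (hr : 0 ≤ r) (hγ : 0 ≤ γ) :
    (1 / Real.sqrt (1 + γ ^ 2)) * Jint n r γ ≤ Ssup n r := by
  have hin : ∀ γ : ℝ, (⨆ _ : γ ∈ Set.Ici (0:ℝ), (1 / Real.sqrt (1 + γ ^ 2)) * Jint n r γ)
      ≤ (n + n + n * r) * (π/2) * π := by
    intro γ
    exact Real.iSup_le (fun h => fterm_le n hn r γ hr h) (by positivity)
  have h2 := le_ciSup (f := fun γ : ℝ => ⨆ _ : γ ∈ Set.Ici (0:ℝ), (1 / Real.sqrt (1 + γ ^ 2)) * Jint n r γ)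
    ⟨_, by rintro _ ⟨γ, rfl⟩; exact hin γ⟩ γ
  refine le_trans (le_of_eq ?_) h2
  have : γ ∈ Set.Ici (0:ℝ) := hγ
  simp [this]

lemma Ssup_le (n : ℕ) (r C : ℝ) (hC : 0 ≤ C)
    (h : ∀ γ : ℝ, 0 ≤ γ → (1 / Real.sqrt (1 + γ ^ 2)) * Jint n r γ ≤ C) : Ssup n r ≤ C :=
  Real.iSup_le (fun γ => Real.iSup_le (fun hγ => h γ hγ) hC) hC

lemma norm_dir {k : ℕ} (e e' : Eu (k+2)) (he : ‖e‖ = 1) (he' : ‖e'‖ = 1)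
    (hee : ⟪e, e'⟫ = 0) (γ : ℝ) : ‖e + γ • e'‖ = √(1 + γ^2) := by
  rw [eq_comm, Real.sqrt_eq_iff_eq_sq (by positivity) (norm_nonneg _), norm_add_sq_real, he,
    inner_smul_right, hee, norm_smul, he', Real.norm_eq_abs, mul_one, sq_abs]
  ring

lemma upper_pos {k : ℕ} (hk : 1 ≤ k) (R : ℝ) (hR : 0 < R) (x e : Eu (k+2)) (hx : ‖x‖ < R)
    (he : ‖e‖ = 1) (hxe : x = ‖x‖ • e)
    (g : sphere (0 : Eu (k+2)) R → ℝ) (hg : Measurable g)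
    (hg1 : ∀ᵐ y ∂(sphereMeasureR (k+2) R hR), |g y| ≤ 1) (v : Eu (k+2)) (hv : 0 < ⟪e, v⟫) :
    |⟪gradient (poissonBallR R hR g) x, v⟫| ≤ KcoefR (k+2) R ‖x‖ * ‖v‖ := by
  set a := ⟪e, v⟫ with ha
  have hw : ⟪e, v - a • e⟫ = 0 := by
    rw [inner_sub_right, inner_smul_right, real_inner_self_eq_norm_sq, he, ← ha]; ring
  obtain ⟨e', he', hee, hwe⟩ := exists_unit_perp_dir e (v - a • e) hw
  obtain ⟨γ, hγd⟩ : ∃ γ, γ = ‖v - a • e‖ / a := ⟨_, rfl⟩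
  have hγ : 0 ≤ γ := by rw [hγd]; positivity
  have haγ : ‖v - a • e‖ = a * γ := by rw [hγd]; field_simp
  have hve : v = a • (e + γ • e') := by
    rw [smul_add, smul_smul, ← haγ, ← hwe]; abel
  have hnv : ‖v‖ = a * √(1 + γ^2) := by
    rw [hve, norm_smul, norm_dir e e' he he' hee, Real.norm_of_nonneg hv.le]
  have hs : 0 < √(1 + γ^2) := by positivity
  have hc : 0 ≤ 1 / (sphereArea (k+2) * R) := by
    have := sphereArea_pos k
    positivity
  have hI := Kvec_inner_integrable R hR x (e + γ • e') hx
  have h1 : |⟪gradient (poissonBallR R hR g) x, e + γ • e'⟫| ≤ Pfac k R ‖x‖ * Jint (k+2) (‖x‖/R) γ := by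
    unfold Pfac
    rw [← M_eq hk R hR e e' x he he' hee hx hxe γ hγ, gradient_inner R hR x hx g hg hg1, abs_mul,
      abs_of_nonneg hc]
    refine mul_le_mul_of_nonneg_left ?_ hc
    refine (abs_integral_le_integral_abs).trans ?_
    refine integral_mono_of_nonneg (ae_of_all _ fun y => abs_nonneg _) hI.abs ?_
    filter_upwards [hg1] with y hy
    rw [abs_mul]
    exact mul_le_of_le_one_right (abs_nonneg _) hy
  have h2 := le_Ssup (k+2) (by omega) (‖x‖/R) γ (by positivity) hγ
  rw [div_mul_eq_mul_div, one_mul, div_le_iff₀ hs] at h2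
  rw [hnv, Kcoef_eq, hve, inner_smul_right, abs_mul, abs_of_pos hv]
  have hP := Pfac_pos hk hR (norm_nonneg x) hx
  calc _ ≤ a * (Pfac k R ‖x‖ * (Ssup (k+2) (‖x‖/R) * √(1 + γ^2))) := by
        refine mul_le_mul_of_nonneg_left (h1.trans ?_) hv.le
        exact mul_le_mul_of_nonneg_left h2 hP.le
    _ = _ := by ring

lemma upper_nonneg {k : ℕ} (hk : 1 ≤ k) (R : ℝ) (hR : 0 < R) (x e : Eu (k+2)) (hx : ‖x‖ < R)
    (he : ‖e‖ = 1) (hxe : x = ‖x‖ • e)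
    (g : sphere (0 : Eu (k+2)) R → ℝ) (hg : Measurable g)
    (hg1 : ∀ᵐ y ∂(sphereMeasureR (k+2) R hR), |g y| ≤ 1) (v : Eu (k+2)) (hv : 0 ≤ ⟪e, v⟫) :
    |⟪gradient (poissonBallR R hR g) x, v⟫| ≤ KcoefR (k+2) R ‖x‖ * ‖v‖ := by
  set G := gradient (poissonBallR R hR g) x
  have c1 : Tendsto (fun ε : ℝ => |⟪G, v + ε • e⟫|) (nhdsWithin 0 (Set.Ioi 0)) (nhds |⟪G, v + (0:ℝ) • e⟫|) :=
    (Continuous.tendsto (by fun_prop) 0).mono_left nhdsWithin_le_nhds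
  have c2 : Tendsto (fun ε : ℝ => KcoefR (k+2) R ‖x‖ * ‖v + ε • e‖) (nhdsWithin 0 (Set.Ioi 0))
      (nhds (KcoefR (k+2) R ‖x‖ * ‖v + (0:ℝ) • e‖)) :=
    ((by fun_prop : Continuous (fun ε : ℝ => KcoefR (k+2) R ‖x‖ * ‖v + ε • e‖)).tendsto 0).mono_left
      nhdsWithin_le_nhds
  have := le_of_tendsto_of_tendsto c1 c2 (by
    filter_upwards [self_mem_nhdsWithin] with ε hε
    refine upper_pos hk R hR x e hx he hxe g hg hg1 _ ?_
    rw [inner_add_right, inner_smul_right, real_inner_self_eq_norm_sq, he]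
    have : (0:ℝ) < ε := hε
    linarith)
  simpa using this

lemma upper_all {k : ℕ} (hk : 1 ≤ k) (R : ℝ) (hR : 0 < R) (x : Eu (k+2)) (hx : ‖x‖ < R)
    (g : sphere (0 : Eu (k+2)) R → ℝ) (hg : Measurable g)
    (hg1 : ∀ᵐ y ∂(sphereMeasureR (k+2) R hR), |g y| ≤ 1) :
    ‖gradient (poissonBallR R hR g) x‖ ≤ KcoefR (k+2) R ‖x‖ := by
  obtain ⟨e, he, hxe⟩ := exists_unit_dir x
  have key : ∀ v : Eu (k+2), |⟪gradient (poissonBallR R hR g) x, v⟫| ≤ KcoefR (k+2) R ‖x‖ * ‖v‖ := by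
    intro v
    rcases le_total 0 ⟪e, v⟫ with h | h
    · exact upper_nonneg hk R hR x e hx he hxe g hg hg1 v h
    · have := upper_nonneg hk R hR x e hx he hxe g hg hg1 (-v) (by rw [inner_neg_right]; linarith)
      simpa using this
  set G := gradient (poissonBallR R hR g) x
  by_cases hG : ‖G‖ = 0
  · rw [hG, Kcoef_eq]
    refine mul_nonneg (Pfac_pos hk hR (norm_nonneg x) hx).le ?_
    refine le_trans ?_ (le_Ssup (k+2) (by omega) (‖x‖/R) 0 (by positivity) le_rfl)
    exact mul_nonneg (by positivity) (Jint_nonneg _ _ _)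
  · have h := key G
    rw [real_inner_self_eq_norm_sq, abs_of_nonneg (by positivity), sq] at h
    exact le_of_mul_le_mul_right h (lt_of_le_of_ne (norm_nonneg _) (Ne.symm hG))

lemma lower_all {k : ℕ} (hk : 1 ≤ k) (R : ℝ) (hR : 0 < R) (x : Eu (k+2)) (hx : ‖x‖ < R) (c : ℝ)
    (hc : ∀ g : sphere (0 : Eu (k+2)) R → ℝ, Measurable g →
      (∀ᵐ y ∂(sphereMeasureR (k+2) R hR), |g y| ≤ 1) →
        ‖gradient (poissonBallR R hR g) x‖ ≤ c) : KcoefR (k+2) R ‖x‖ ≤ c := by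
  obtain ⟨e, he, hxe⟩ := exists_unit_dir x
  obtain ⟨e', he', hee⟩ := exists_unit_perp e
  have hP := Pfac_pos hk hR (norm_nonneg x) hx
  have hc0 : 0 ≤ c := (norm_nonneg _).trans
    (hc (fun _ => 0) measurable_const (ae_of_all _ fun _ => by simp))
  rw [Kcoef_eq, ← le_div_iff₀' hP]
  refine Ssup_le _ _ _ (by positivity) fun γ hγ => ?_
  have hs : 0 < √(1 + γ^2) := by positivity
  rw [le_div_iff₀' hP, div_mul_eq_mul_div, one_mul, ← mul_div_assoc, div_le_iff₀ hs]
  have hm : Measurable (fun y : sphere (0 : Eu (k+2)) R => ⟪Kvec R x (y : Eu (k+2)), e + γ • e'⟫) := by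
    have := Kvec_meas R x
    fun_prop
  set g : sphere (0 : Eu (k+2)) R → ℝ := fun y =>
    if 0 ≤ ⟪Kvec R x (y : Eu (k+2)), e + γ • e'⟫ then 1 else -1 with hgd
  have hg : Measurable g :=
    Measurable.ite (measurableSet_le measurable_const hm) measurable_const measurable_const
  have hg1 : ∀ᵐ y ∂(sphereMeasureR (k+2) R hR), |g y| ≤ 1 := by
    refine ae_of_all _ fun y => ?_
    simp only [hgd]
    split_ifs <;> simp
  have h1 := hc g hg hg1
  have h2 := gradient_inner R hR x hx g hg hg1 (e + γ • e')
  have h3 : ∀ y : sphere (0 : Eu (k+2)) R,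
      ⟪Kvec R x (y : Eu (k+2)), e + γ • e'⟫ * g y = |⟪Kvec R x (y : Eu (k+2)), e + γ • e'⟫| := by
    intro y
    simp only [hgd]
    split_ifs with h
    · rw [abs_of_nonneg h, mul_one]
    · rw [abs_of_neg (not_le.1 h)]; ring
  simp only [h3] at h2
  rw [M_eq hk R hR e e' x he he' hee hx hxe γ hγ] at h2
  unfold Pfac
  rw [← h2]
  refine (real_inner_le_norm _ _).trans ?_
  rw [norm_dir e e' he he' hee]
  gcongr



/-- For `n ≥ 3`, `R > 0` and `x` in the open ball `𝔹_R ⊂ ℝⁿ`, the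
smallest constant `c` such that `|∇u(x)| ≤ c ‖g‖_{L^∞(∂𝔹_R)}` for every Poisson
integral `u` of `g ∈ L^∞(∂𝔹_R)` (equivalently, such that `|∇u(x)| ≤ c` whenever
`‖g‖_∞ ≤ 1`) equals `𝒦_{n,R}(x)` as given by the double-integral formula. -/
theorem sharp_gradient_coefficient_ball_radius
    (n : ℕ) (hn : 3 ≤ n) (R : ℝ) (hR : 0 < R)
    (x : Eu n) (hx : x ∈ Metric.ball (0 : Eu n) R) :
    IsLeast {c : ℝ |
        ∀ g : Metric.sphere (0 : Eu n) R → ℝ, Measurable g →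
          (∀ᵐ y ∂(sphereMeasureR n R hR), |g y| ≤ 1) →
          ‖gradient (poissonBallR R hR g) x‖ ≤ c}
      (KcoefR n R ‖x‖) := by
  obtain ⟨k, rfl⟩ : ∃ k, n = k + 2 := ⟨n - 2, by omega⟩
  have hx' : ‖x‖ < R := by simpa using hx
  exact ⟨fun g hg hg1 => upper_all (by omega) R hR x hx' g hg hg1,
    fun c hc => lower_all (by omega) R hR x hx' c hc⟩
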